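/- The correlation operator K defined by ⟨g∘π₁, (Kh)∘π₁⟩ = ⟨g∘π₁, h∘π₂⟩ on L²(S^{N−1}(√N), σ^{(N)}) has the explicit integral form (Kh)(v) = (|S^{N−3}|/|S^{N−2}|) ∫_{−1}^{1} h(√(N−v²) s)(1−s²)^{(N−4)/2} ds. -/

import Mathlib

/-!
Write `N = k + 4` and split `v ∈ ℝ^N` as `(v 0, w)` with tail `w = tailVec v ∈ ℝ^(k+3)`; on the
sphere, `‖w‖² = N - (v 0)²`. For every `x ≠ 0` in `ℝ^(k+3)` there is an isometry of `ℝ^N` that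
preserves the coordinate `v 0` and turns `v 1` into `⟪x, w⟫ / ‖x‖`
(`exists_isometry_rotating`), so invariance of `σ` gives
`∫ g(v 0) h(v 1) dσ = ∫ g(v 0) h(⟪x, w⟫ / ‖x‖) dσ`.
Averaging this identity over `x` with the Gaussian weight `exp (-‖x‖²)` and exchanging the two
integrals reduces the claim to computing, for fixed `w`, the Gaussian average of
`h(⟪x, w⟫ / ‖x‖)`. Neither uniqueness nor a disintegration of the measure `σ` is needed.

By rotation invariance of Lebesgue measure the average only depends on `‖w‖`, and is that of
`h(‖w‖ · x 0 / ‖x‖)` (`integral_inner_direction`). The law of `x 0 / ‖x‖` is found in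
`integral_direction`: Fubini on `ℝ × ℝ^(k+2)`, the radial integration formula in `ℝ^(k+2)`, plane
polar coordinates and the substitution `s = cos θ` give `|S^{k+1}| Q ∫ f(s) (1 - s²)^{k/2} ds` with
`Q = ∫_0^∞ r^(k+2) exp (-r²) dr`. The total Gaussian mass is `|S^{k+2}| Q`, so the quotient has
exactly the constant of `kacK`.
-/


open MeasureTheory

/-- The surface area `|S^m| = 2 π^{(m+1)/2} / Γ((m+1)/2)` of the unit `m`-sphere. -/
noncomputable def unitSphereArea (m : ℕ) : ℝ :=
  2 * Real.pi ^ (((m : ℝ) + 1) / 2) / Real.Gamma (((m : ℝ) + 1) / 2)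

/-- The correlation operator `K` on functions of one variable over `S^{N-1}(√N)`:
`(Kh)(v) = (|S^{N-3}|/|S^{N-2}|) ∫_{-1}^1 h(√(N-v²)s)(1-s²)^{(N-4)/2} ds`. -/
noncomputable def kacK (N : ℕ) (h : ℝ → ℝ) (v : ℝ) : ℝ :=
  (unitSphereArea (N - 3) / unitSphereArea (N - 2)) *
    ∫ s in (-1 : ℝ)..1,
      h (Real.sqrt ((N : ℝ) - v ^ 2) * s) * (1 - s ^ 2) ^ (((N : ℝ) - 4) / 2)

/-! ### Integration on Euclidean space -/

lemma succ_mul_volume_ball (n : ℕ) :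
    ((n : ℝ) + 1) * (volume : Measure (EuclideanSpace ℝ (Fin (n + 1)))).real (Metric.ball 0 1)
      = unitSphereArea n := by
  have hpos : (0 : ℝ) < ((n : ℝ) + 1) / 2 := by positivity
  have hG := Real.Gamma_pos_of_pos hpos
  have hpi : √Real.pi ^ (n + 1) = Real.pi ^ (((n : ℝ) + 1) / 2) := by
    rw [Real.sqrt_eq_rpow, ← Real.rpow_natCast, ← Real.rpow_mul Real.pi_pos.le]
    push_cast; ring_nf
  rw [Measure.real, EuclideanSpace.volume_ball, unitSphereArea]
  simp only [Fintype.card_fin, ENNReal.ofReal_one, one_pow, one_mul]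
  rw [ENNReal.toReal_ofReal (by push_cast; positivity), hpi]
  push_cast
  rw [Real.Gamma_add_one hpos.ne']
  field_simp

lemma integral_radial (n : ℕ) (f : ℝ → ℝ) :
    ∫ x : EuclideanSpace ℝ (Fin (n + 1)), f ‖x‖
      = unitSphereArea n * ∫ r in Set.Ioi (0 : ℝ), r ^ n * f r := by
  rw [integral_fun_norm_addHaar, ← succ_mul_volume_ball]
  simp [mul_assoc]

/-- Lebesgue measure on `ℝ^(m+1)` is the product of those on `ℝ` and `ℝ^m`. -/
lemma integral_cons {m : ℕ} (F : EuclideanSpace ℝ (Fin (m + 1)) → ℝ) :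
    ∫ x, F x = ∫ p : ℝ × EuclideanSpace ℝ (Fin m),
      F (WithLp.toLp 2 (Fin.cons p.1 p.2.ofLp)) := by
  rw [← (PiLp.volume_preserving_toLp (Fin (m + 1))).integral_comp
      (MeasurableEquiv.toLp 2 (Fin (m + 1) → ℝ)).measurableEmbedding F,
    ← (volume_preserving_piFinSuccAbove (fun _ : Fin (m + 1) => ℝ) 0).symm.integral_comp
      (MeasurableEquiv.measurableEmbedding _)]
  rw [Measure.volume_eq_prod, Measure.volume_eq_prod, ← ((MeasurePreserving.id (volume : Measure ℝ)).prod
    (PiLp.volume_preserving_ofLp (Fin m))).integral_comp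
      (((MeasurableEquiv.refl ℝ).prodCongr
        (MeasurableEquiv.toLp 2 (Fin m → ℝ)).symm).measurableEmbedding)]
  refine integral_congr_ae (ae_of_all _ fun p => ?_)
  simp [MeasurableEquiv.piFinSuccAbove, Fin.insertNthEquiv]

lemma norm_cons_sq {m : ℕ} (t : ℝ) (y : EuclideanSpace ℝ (Fin m)) :
    ‖(WithLp.toLp 2 (Fin.cons t y.ofLp) : EuclideanSpace ℝ (Fin (m + 1)))‖ ^ 2
      = t ^ 2 + ‖y‖ ^ 2 := by
  simp [EuclideanSpace.norm_sq_eq, Fin.sum_univ_succ]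

/-! ### The law of a coordinate of a random direction -/

/-- The substitution `s = cos θ`. -/
lemma integral_sin_pow_mul_comp_cos (k : ℕ) (f : ℝ → ℝ) (hf : Continuous f) :
    ∫ θ in Set.Ioo 0 Real.pi, Real.sin θ ^ (k + 1) * f (Real.cos θ)
      = ∫ s in (-1 : ℝ)..1, f s * (1 - s ^ 2) ^ ((k : ℝ) / 2) := by
  have hc : Continuous fun s : ℝ => f s * (1 - s ^ 2) ^ ((k : ℝ) / 2) :=
    hf.mul (((continuous_const.sub (continuous_pow 2))).rpow_const fun _ => Or.inr (by positivity))
  have key := intervalIntegral.integral_comp_mul_deriv (a := 0) (b := Real.pi)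
    (fun x _ => Real.hasDerivAt_cos x) (by fun_prop) hc
  rw [Real.cos_zero, Real.cos_pi, intervalIntegral.integral_symm (-1) 1,
    intervalIntegral.integral_of_le Real.pi_pos.le, integral_Ioc_eq_integral_Ioo] at key
  rw [← neg_inj, ← key, ← integral_neg]
  refine setIntegral_congr_fun measurableSet_Ioo fun θ hθ => ?_
  have hs := (Real.sin_pos_of_mem_Ioo hθ).le
  have : (1 - Real.cos θ ^ 2) ^ ((k : ℝ) / 2) = Real.sin θ ^ k := by
    rw [← Real.sin_sq, ← Real.rpow_natCast (Real.sin θ) 2, ← Real.rpow_mul hs,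
      ← Real.rpow_natCast]
    push_cast; ring_nf
  simp only [Function.comp, this]
  ring

lemma integrable_gauss (n : ℕ) :
    Integrable fun x : EuclideanSpace ℝ (Fin n) => Real.exp (-‖x‖ ^ 2) := by
  have := (GaussianFourier.integrable_cexp_neg_mul_sq_norm_add (V := EuclideanSpace ℝ (Fin n))
    (b := 1) (by simp) 0 0).norm
  refine this.congr (ae_of_all _ fun x => ?_)
  simp [Complex.norm_exp, ← Complex.ofReal_pow]

/-- Plane polar coordinates `(r cos θ, r sin θ)` separate the angular and the radial part of this
integral over the upper half plane. -/
lemma integral_half_plane (k : ℕ) (f : ℝ → ℝ) (hf : Continuous f) :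
    ∫ p in Set.univ ×ˢ Set.Ioi (0 : ℝ), p.2 ^ (k + 1) *
        (f (p.1 / √(p.1 ^ 2 + p.2 ^ 2)) * Real.exp (-(p.1 ^ 2 + p.2 ^ 2)))
      = (∫ r in Set.Ioi (0 : ℝ), r ^ (k + 2) * Real.exp (-r ^ 2)) *
        ∫ s in (-1 : ℝ)..1, f s * (1 - s ^ 2) ^ ((k : ℝ) / 2) := by
  rw [← integral_indicator (MeasurableSet.univ.prod measurableSet_Ioi),
    ← integral_comp_polarCoord_symm, ← integral_sin_pow_mul_comp_cos k f hf, ← setIntegral_prod_mul]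
  have hsub : Set.Ioi (0 : ℝ) ×ˢ Set.Ioo 0 Real.pi ⊆ polarCoord.target :=
    Set.prod_mono_right (Set.Ioo_subset_Ioo_left (by linarith [Real.pi_pos]))
  -- The indicator of the half plane restricts the angle from `(-π, π)` to `(0, π)`.
  rw [setIntegral_eq_of_subset_of_forall_sdiff_eq_zero
    polarCoord.open_target.measurableSet hsub]
  · refine setIntegral_congr_fun (measurableSet_Ioi.prod measurableSet_Ioo) ?_
    rintro ⟨ρ, θ⟩ ⟨hρ, hθ⟩
    simp only [Set.mem_Ioi] at hρ
    have hs := Real.sin_pos_of_mem_Ioo hθ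
    have h2 : (ρ * Real.cos θ) ^ 2 + (ρ * Real.sin θ) ^ 2 = ρ ^ 2 := by
      linear_combination ρ ^ 2 * Real.sin_sq_add_cos_sq θ
    simp only [polarCoord_symm_apply, Set.indicator, Set.mem_prod, Set.mem_univ, true_and,
      Set.mem_Ioi, mul_pos hρ hs, if_true, h2, Real.sqrt_sq hρ.le, smul_eq_mul,
      mul_div_cancel_left₀ _ hρ.ne']
    ring
  · rintro ⟨ρ, θ⟩ ⟨⟨hρ, hθ⟩, hn⟩
    simp only [Set.mem_Ioi, Set.mem_Ioo, Set.mem_prod, not_and, not_lt] at hρ hθ hn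
    have hθ0 : θ ≤ 0 := by
      by_contra! h0
      exact absurd hθ.2 (not_lt.2 (hn hρ h0))
    have hs : Real.sin θ ≤ 0 := Real.sin_nonpos_of_nonpos_of_neg_pi_le hθ0 hθ.1.le
    have : ¬ 0 < ρ * Real.sin θ := not_lt.2 (mul_nonpos_of_nonneg_of_nonpos hρ.le hs)
    simp [Set.indicator, this]

/-- Up to normalization, the first coordinate of a uniformly distributed direction in `ℝ^(k+3)` has
density `(1 - s²)^{k/2}` on `[-1, 1]`. The Gaussian weight makes the direction uniform; at `x = 0`
the quotient takes the junk value `0`, on a null set. -/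
lemma integral_direction (k : ℕ) (f : ℝ → ℝ) (hf : Continuous f) (C : ℝ) (hC : ∀ x, |f x| ≤ C) :
    ∫ x : EuclideanSpace ℝ (Fin (k + 3)), f (x 0 / ‖x‖) * Real.exp (-‖x‖ ^ 2)
      = unitSphereArea (k + 1) * ((∫ r in Set.Ioi (0 : ℝ), r ^ (k + 2) * Real.exp (-r ^ 2)) *
        ∫ s in (-1 : ℝ)..1, f s * (1 - s ^ 2) ^ ((k : ℝ) / 2)) := by
  have hn (t : ℝ) (y : EuclideanSpace ℝ (Fin (k + 2))) :
      ‖(WithLp.toLp 2 (Fin.cons t y.ofLp) : EuclideanSpace ℝ (Fin (k + 3)))‖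
        = √(t ^ 2 + ‖y‖ ^ 2) := by
    rw [← norm_cons_sq, Real.sqrt_sq (norm_nonneg _)]
  have hg : Integrable fun t : ℝ => Real.exp (-t ^ 2) := by
    simpa using integrable_exp_neg_mul_sq one_pos
  have hr : IntegrableOn (fun r : ℝ => r ^ (k + 1) * Real.exp (-r ^ 2)) (Set.Ioi 0) := by
    have := integrableOn_rpow_mul_exp_neg_mul_sq one_pos (s := ((k + 1 : ℕ) : ℝ))
      (by push_cast; linarith [(Nat.cast_nonneg k : (0 : ℝ) ≤ k)])
    simpa only [Real.rpow_natCast, neg_mul, one_mul] using this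
  have hmeas := hf.measurable
  rw [integral_cons]
  simp only [hn, Fin.cons_zero, Real.sq_sqrt (add_nonneg (sq_nonneg _) (sq_nonneg _))]
  rw [Measure.volume_eq_prod, integral_prod]
  · have hin (t : ℝ) := integral_radial (k + 1)
      (fun r => f (t / √(t ^ 2 + r ^ 2)) * Real.exp (-(t ^ 2 + r ^ 2)))
    simp only [hin]
    rw [integral_const_mul, ← integral_half_plane k f hf, Measure.volume_eq_prod,
      ← Measure.prod_restrict, Measure.restrict_univ, integral_prod]
    refine ((hg.mul_prod hr).bdd_mul (c := C)
      (f := fun p : ℝ × ℝ => f (p.1 / √(p.1 ^ 2 + p.2 ^ 2))) ?_ ?_).congr ?_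
    · exact Measurable.aestronglyMeasurable (by fun_prop)
    · exact ae_of_all _ fun p => hC _
    · refine ae_of_all _ fun p => ?_
      simp only [neg_add, Real.exp_add]
      ring
  · refine ((hg.mul_prod (integrable_gauss (k + 2))).bdd_mul (c := C)
      (f := fun p : ℝ × EuclideanSpace ℝ (Fin (k + 2)) => f (p.1 / √(p.1 ^ 2 + ‖p.2‖ ^ 2)))
        ?_ ?_).congr ?_
    · exact Measurable.aestronglyMeasurable (by fun_prop)
    · exact ae_of_all _ fun p => hC _
    · refine ae_of_all _ fun p => ?_
      simp only [neg_add, Real.exp_add]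

/-! ### Gaussian averages over directions and the kernel -/

lemma exists_orthonormalBasis_zero {n : ℕ} (w : EuclideanSpace ℝ (Fin (n + 1))) :
    ∃ b : OrthonormalBasis (Fin (n + 1)) ℝ (EuclideanSpace ℝ (Fin (n + 1))),
      w = ‖w‖ • b 0 := by
  rcases eq_or_ne w 0 with rfl | hw
  · exact ⟨EuclideanSpace.basisFun _ ℝ, by simp⟩
  have hw' : ‖w‖ ≠ 0 := norm_ne_zero_iff.2 hw
  obtain ⟨b, hb⟩ := Orthonormal.exists_orthonormalBasis_extension_of_card_eq
    (𝕜 := ℝ) (ι := Fin (n + 1)) (E := EuclideanSpace ℝ (Fin (n + 1))) (by simp)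
    (v := fun _ => ‖w‖⁻¹ • w) (s := {0})
    ⟨fun i => by simp [norm_smul, hw'], fun i j hij => absurd (Subsingleton.elim i j) hij⟩
  refine ⟨b, ?_⟩
  rw [hb 0 rfl, smul_inv_smul₀ hw']

lemma integral_inner_direction {n : ℕ} (h : ℝ → ℝ) (w : EuclideanSpace ℝ (Fin (n + 1))) :
    ∫ x : EuclideanSpace ℝ (Fin (n + 1)), h (inner ℝ x w / ‖x‖) * Real.exp (-‖x‖ ^ 2)
      = ∫ x : EuclideanSpace ℝ (Fin (n + 1)), h (‖w‖ * (x 0 / ‖x‖)) * Real.exp (-‖x‖ ^ 2) := by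
  obtain ⟨b, hb⟩ := exists_orthonormalBasis_zero w
  conv_rhs => rw [← b.repr.measurePreserving.integral_comp b.repr.toHomeomorph.measurableEmbedding]
  congr! 4 with x
  · rw [OrthonormalBasis.repr_apply_apply, LinearIsometryEquiv.norm_map]
    conv_lhs => rw [hb]
    rw [inner_smul_right, real_inner_comm, mul_div_assoc]
  · rw [LinearIsometryEquiv.norm_map]

lemma unitSphereArea_pos (m : ℕ) : 0 < unitSphereArea m := by
  have := Real.Gamma_pos_of_pos (show (0 : ℝ) < ((m : ℝ) + 1) / 2 by positivity)
  unfold unitSphereArea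
  positivity

lemma integral_gauss_eq (k : ℕ) :
    ∫ x : EuclideanSpace ℝ (Fin (k + 3)), Real.exp (-‖x‖ ^ 2)
      = unitSphereArea (k + 2) * ∫ r in Set.Ioi (0 : ℝ), r ^ (k + 2) * Real.exp (-r ^ 2) :=
  integral_radial (k + 2) fun r => Real.exp (-r ^ 2)

/-- The Gaussian average over `x` of `h(⟪x, w⟫ / ‖x‖)` is `kacK` when `w` is the tail of a point of the
sphere of radius `√(k+4)` with first coordinate `a`. -/
lemma integral_inner_eq_kacK (k : ℕ) (h : ℝ → ℝ) (hh : Continuous h) (C : ℝ)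
    (hC : ∀ x, |h x| ≤ C) (a : ℝ) (w : EuclideanSpace ℝ (Fin (k + 3)))
    (hw : ‖w‖ = √(((k + 4 : ℕ) : ℝ) - a ^ 2)) :
    ∫ x : EuclideanSpace ℝ (Fin (k + 3)), h (inner ℝ x w / ‖x‖) * Real.exp (-‖x‖ ^ 2)
      = (∫ x : EuclideanSpace ℝ (Fin (k + 3)), Real.exp (-‖x‖ ^ 2)) * kacK (k + 4) h a := by
  have h4 : (((k + 4 : ℕ) : ℝ) - 4) / 2 = (k : ℝ) / 2 := by push_cast; ring
  rw [integral_inner_direction, integral_direction k (fun s => h (‖w‖ * s)) (by fun_prop) C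
    (fun _ => hC _), integral_gauss_eq, kacK, h4, hw,
    show k + 4 - 3 = k + 1 by omega, show k + 4 - 2 = k + 2 by omega]
  have := (unitSphereArea_pos (k + 2)).ne'
  field_simp

/-! ### Isometries fixing the first coordinate -/

/-- The tail of a vector: all of its coordinates except the one of index `0`. -/
noncomputable def tailVec {n : ℕ} (v : EuclideanSpace ℝ (Fin (n + 1))) :
    EuclideanSpace ℝ (Fin n) :=
  WithLp.toLp 2 fun i => v i.succ

lemma continuous_tailVec {n : ℕ} : Continuous (tailVec (n := n)) := by
  unfold tailVec; fun_prop

/-- The coordinate isometry of an orthonormal basis that starts with `e₀` and the unit vector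
`(0, x / ‖x‖)`. -/
lemma exists_isometry_rotating {n : ℕ} (x : EuclideanSpace ℝ (Fin (n + 1))) (hx : x ≠ 0) :
    ∃ A : EuclideanSpace ℝ (Fin (n + 2)) ≃ₗᵢ[ℝ] EuclideanSpace ℝ (Fin (n + 2)),
      ∀ v, A v 0 = v 0 ∧ A v 1 = inner ℝ x (tailVec v) / ‖x‖ := by
  have hx' : ‖x‖ ≠ 0 := norm_ne_zero_iff.2 hx
  set e : EuclideanSpace ℝ (Fin (n + 2)) := EuclideanSpace.single 0 1
  set u : EuclideanSpace ℝ (Fin (n + 2)) := ‖x‖⁻¹ • WithLp.toLp 2 (Fin.cons 0 x.ofLp)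
  have hu : ‖u‖ = 1 := by
    have : ‖(WithLp.toLp 2 (Fin.cons 0 x.ofLp) : EuclideanSpace ℝ (Fin (n + 2)))‖ = ‖x‖ := by
      rw [← sq_eq_sq₀ (norm_nonneg _) (norm_nonneg _), norm_cons_sq]; ring
    simp [u, norm_smul, this, hx']
  have heu : inner ℝ e u = 0 := by
    simp [e, u, EuclideanSpace.inner_single_left]
  have hon : Orthonormal ℝ (({0, 1} : Set (Fin (n + 2))).domRestrict
      fun i => if i = 0 then e else u) := by
    constructor
    · rintro ⟨i, rfl | rfl⟩ <;> simp [e, hu]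
    · rintro ⟨i, rfl | rfl⟩ ⟨j, rfl | rfl⟩ hij
      · exact absurd rfl hij
      · simpa using heu
      · simpa [real_inner_comm] using heu
      · exact absurd rfl hij
  obtain ⟨b, hb⟩ := hon.exists_orthonormalBasis_extension_of_card_eq (by simp)
  refine ⟨b.repr, fun v => ⟨?_, ?_⟩⟩
  · rw [OrthonormalBasis.repr_apply_apply, hb 0 (by simp)]
    simp [e, EuclideanSpace.inner_single_left]
  · rw [OrthonormalBasis.repr_apply_apply, hb 1 (by simp)]
    simp [u, inner_smul_left, PiLp.inner_apply, Fin.sum_univ_succ, tailVec, div_eq_inv_mul]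

/-- The two-coordinate correlation operator on the sphere `S^{N-1}(√N)` has the explicit
integral kernel `kacK`: `⟨g∘π₁, h∘π₂⟩ = ⟨g∘π₁, (Kh)∘π₁⟩` for the uniform measure `σ`. -/
theorem correlation_operator_formula (N : ℕ) (hN : 4 ≤ N)
    (σ : Measure (EuclideanSpace ℝ (Fin N)))
    (hprob : IsProbabilityMeasure σ)
    (hsupp : σ (Metric.sphere (0 : EuclideanSpace ℝ (Fin N)) (Real.sqrt N))ᶜ = 0)
    (hinv : ∀ g : EuclideanSpace ℝ (Fin N) ≃ₗᵢ[ℝ] EuclideanSpace ℝ (Fin N),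
      Measure.map g σ = σ)
    (g h : ℝ → ℝ) (hg : Continuous g) (hh : Continuous h)
    (hgb : ∃ C : ℝ, ∀ x, |g x| ≤ C) (hhb : ∃ C : ℝ, ∀ x, |h x| ≤ C) :
    ∫ v, g (v (⟨0, by omega⟩ : Fin N)) * h (v (⟨1, by omega⟩ : Fin N)) ∂σ
      = ∫ v, g (v (⟨0, by omega⟩ : Fin N)) * kacK N h (v (⟨0, by omega⟩ : Fin N)) ∂σ := by
  obtain ⟨k, rfl⟩ : ∃ k, N = k + 4 := ⟨N - 4, by omega⟩
  obtain ⟨Cg, hCg⟩ := hgb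
  obtain ⟨Ch, hCh⟩ := hhb
  change ∫ v, g (v 0) * h (v 1) ∂σ = ∫ v, g (v 0) * kacK (k + 4) h (v 0) ∂σ
  set Z := ∫ x : EuclideanSpace ℝ (Fin (k + 3)), Real.exp (-‖x‖ ^ 2)
  have hZ : 0 < Z := integral_exp_pos (integrable_gauss _)
  have hgm := hg.measurable
  have hhm := hh.measurable
  have htm : Measurable (tailVec (n := k + 3)) := continuous_tailVec.measurable
  have hrot (x : EuclideanSpace ℝ (Fin (k + 3))) (hx : x ≠ 0) :
      ∫ v, g (v 0) * h (v 1) ∂σ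
        = ∫ v, g (v 0) * h (inner ℝ x (tailVec v) / ‖x‖) ∂σ := by
    obtain ⟨A, hA⟩ := exists_isometry_rotating x hx
    conv_lhs => rw [← hinv A]
    refine (A.toHomeomorph.measurableEmbedding.integral_map (μ := σ)
      (fun v => g (v 0) * h (v 1))).trans (integral_congr_ae (ae_of_all _ fun v => ?_))
    change g (A v 0) * h (A v 1) = _
    rw [(hA v).1, (hA v).2]
  have hsphere : ∀ᵐ v ∂σ, ‖tailVec v‖ = √(((k + 4 : ℕ) : ℝ) - v 0 ^ 2) := by
    have : ∀ᵐ v ∂σ, v ∈ Metric.sphere (0 : EuclideanSpace ℝ (Fin (k + 4))) √((k + 4 : ℕ) : ℝ) :=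
      hsupp
    filter_upwards [this] with v hv
    rw [mem_sphere_zero_iff_norm] at hv
    have h1 : v = WithLp.toLp 2 (Fin.cons (v 0) (tailVec v).ofLp) := by
      ext i
      refine Fin.cases ?_ (fun j => ?_) i <;> simp [tailVec]
    have h2 := norm_cons_sq (v 0) (tailVec v)
    rw [← h1, hv, Real.sq_sqrt (Nat.cast_nonneg _)] at h2
    rw [h2, add_sub_cancel_left, Real.sqrt_sq (norm_nonneg _)]
  have hint : Integrable (Function.uncurry fun (x : EuclideanSpace ℝ (Fin (k + 3)))
      (v : EuclideanSpace ℝ (Fin (k + 4))) =>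
        g (v 0) * (h (inner ℝ x (tailVec v) / ‖x‖) * Real.exp (-‖x‖ ^ 2)))
      (volume.prod σ) := by
    have hgauss := (integrable_gauss (k + 3)).mul_prod (integrable_const (μ := σ) (1 : ℝ))
    refine ((hgauss.bdd_mul (c := Ch) (f := fun p => h (inner ℝ p.1 (tailVec p.2) / ‖p.1‖))
      ?_ ?_).bdd_mul (c := Cg) (f := fun p => g (p.2 0)) ?_ ?_).congr ?_
    · exact Measurable.aestronglyMeasurable (by fun_prop)
    · exact ae_of_all _ fun p => hCh _
    · exact Measurable.aestronglyMeasurable (by fun_prop)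
    · exact ae_of_all _ fun p => hCg _
    · exact ae_of_all _ fun p => by simp [Function.uncurry]
  refine mul_left_cancel₀ hZ.ne' ?_
  calc Z * ∫ v, g (v 0) * h (v 1) ∂σ
      = ∫ x : EuclideanSpace ℝ (Fin (k + 3)), ∫ v,
          g (v 0) * (h (inner ℝ x (tailVec v) / ‖x‖) * Real.exp (-‖x‖ ^ 2)) ∂σ := by
        rw [← integral_mul_const]
        refine integral_congr_ae ?_
        filter_upwards [Measure.ae_ne volume (0 : EuclideanSpace ℝ (Fin (k + 3)))] with x hx
        rw [hrot x hx, ← integral_const_mul]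
        congr! 2 with v
        ring
    _ = ∫ v, g (v 0) * (Z * kacK (k + 4) h (v 0)) ∂σ := by
        rw [integral_integral_swap hint]
        refine integral_congr_ae ?_
        filter_upwards [hsphere] with v hv
        rw [integral_const_mul, integral_inner_eq_kacK k h hh Ch hCh (v 0) _ hv]
    _ = Z * ∫ v, g (v 0) * kacK (k + 4) h (v 0) ∂σ := by
        rw [← integral_const_mul]
        congr! 2 with v
        ring
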